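/- For every k ∈ ℕ and every k-consistent rules mapping R ∈ 𝓡(k): Pr_{R,Q}(S^{αk, k}) ≥ (Q_min)^k. -/

import Mathlib

/-!
In each group `j` the constraint `q̄ʲ·b̄ʲ ≤ α (q̄ʲ·k̄ʲ)` is an inequality of averages, so some letter
`i` in the support of `q̄ʲ` satisfies `b̄ʲ_i ≤ α k̄ʲ_i` (`exists_good`); since `b̄ʲ_i ≥ 1`, this letter
also has `k̄ʲ_i ≥ 1`. Let `R` choose the group at each step and always play such a letter. The
coverage grows by at least one per step, and by consistency it never jumps past `k`, so after
at most `k` steps one has a word of coverage exactly `k` and cost at most `α k`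
(`exists_word`). Each of its letters has probability at least `Q_min`, and `Q_min ≤ 1`, so this
single word of `A^{αk,k}` already has probability at least `Q_min ^ k`. The remaining words contribute
nonnegative terms to a finite sum.
-/

open scoped Classical

noncomputable section

namespace RB

/-- The alphabet `𝒳`, given as the disjoint union of the groups `𝒳_j`. -/
abbrev X (N : ℕ) (r : Fin N → ℕ) : Type := (j : Fin N) × Fin (r j)

variable {N : ℕ} {r : Fin N → ℕ}

/-- the coverage `κ` of a word (`K` is the concatenation of the `k̄ʲ`) -/
def kap (K : (j : Fin N) → Fin (r j) → ℕ) (l : List (X N r)) : ℕ :=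
  (l.map fun a => K a.1 a.2).sum

/-- the cost `μ` of a word (`B` is the concatenation of the `b̄ʲ`) -/
def mu (B : (j : Fin N) → Fin (r j) → ℕ) (l : List (X N r)) : ℕ :=
  (l.map fun a => B a.1 a.2).sum

/-- `P_{R,Υ}(ā) = ∏_ℓ [Υ_{a_ℓ}` if `a_ℓ ∈ 𝒳_{R(a_1,…,a_{ℓ-1})}`, else `0]` -/
def wordP (R : List (X N r) → Fin N) (Υ : (j : Fin N) → Fin (r j) → ℝ)
    (l : List (X N r)) : ℝ :=
  ∏ ℓ : Fin l.length,
    if (l.get ℓ).1 = R (l.take ℓ.1) then Υ (l.get ℓ).1 (l.get ℓ).2 else 0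

/-- the set of words `A^{b,k}` -/
def ASet (B K : (j : Fin N) → Fin (r j) → ℕ) (bb kb : ℝ) : Set (List (X N r)) :=
  if bb < 0 then ∅
  else if kb ≤ 0 then {[]}
  else {l | l ≠ [] ∧ (mu B l : ℝ) ≤ bb ∧ kb ≤ (kap K l : ℝ) ∧ (kap K l.dropLast : ℝ) < kb}

/-- `Pr_{R,Υ}(S^{b,k}) = Σ_{ā ∈ A^{b,k}} P_{R,Υ}(ā)` (the set `A^{b,k}` is finite,
so the `tsum` is the finite sum) -/
def PrS (B K : (j : Fin N) → Fin (r j) → ℕ) (R : List (X N r) → Fin N)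
    (Υ : (j : Fin N) → Fin (r j) → ℝ) (bb kb : ℝ) : ℝ :=
  ∑' l : ASet B K bb kb, wordP R Υ l.1

/-- `k`-consistent rules mappings: whenever `κ(ā) < k`, every `i ∈ 𝒳_{R(ā)}`
satisfies `K_i ≤ k - κ(ā)`. -/
def Consistent (K : (j : Fin N) → Fin (r j) → ℕ) (k : ℕ)
    (R : List (X N r) → Fin N) : Prop :=
  ∀ l : List (X N r), kap K l < k → ∀ i : Fin (r (R l)), K (R l) i + kap K l ≤ k

/-- Kullback-Leibler divergence -/
def KL {ρ : ℕ} (q g : Fin ρ → ℝ) : ℝ := ∑ i, q i * Real.log (q i / g i)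

/-- the set of values of the `α`-branching optimization problem -/
def BrSet (α : ℝ) {ρ : ℕ} (bv kv : Fin ρ → ℕ) (g : Fin ρ → ℝ) : Set ℝ :=
  {x | ∃ q : Fin ρ → ℝ, (∀ i, 0 ≤ q i) ∧ (∑ i, q i = 1) ∧
        (∑ i, q i * (bv i : ℝ)) ≤ α * ∑ i, q i * (kv i : ℝ) ∧
        x = KL q g / ∑ i, q i * (kv i : ℝ)}

end RB

namespace RB

variable {N : ℕ} {r : Fin N → ℕ}

/-- An inequality between averages holds at some point of the support. -/
lemma exists_good {ρ : ℕ} (α : ℝ) (b k : Fin ρ → ℕ) (q : Fin ρ → ℝ) (hq0 : ∀ i, 0 ≤ q i)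
    (hq1 : ∑ i, q i = 1)
    (h : (∑ i, q i * (b i : ℝ)) ≤ α * (∑ i, q i * (k i : ℝ))) :
    ∃ i, 0 < q i ∧ (b i : ℝ) ≤ α * k i := by
  by_contra! hcon
  obtain ⟨i₀, -, hi₀⟩ : ∃ i ∈ Finset.univ, 0 < q i :=
    Finset.exists_lt_of_sum_lt (f := fun _ => (0 : ℝ)) (by simp [hq1])
  have hlt : ∑ i, q i * (α * k i) < ∑ i, q i * (b i : ℝ) := by
    refine Finset.sum_lt_sum (fun i _ => ?_) ⟨i₀, Finset.mem_univ _, ?_⟩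
    · rcases (hq0 i).eq_or_lt with h0 | h0
      · simp [← h0]
      · exact mul_le_mul_of_nonneg_left (hcon i h0).le h0.le
    · exact mul_lt_mul_of_pos_left (hcon i₀ hi₀) hi₀
  have heq : ∑ i, q i * (α * k i) = α * ∑ i, q i * (k i : ℝ) := by
    rw [Finset.mul_sum]
    exact Finset.sum_congr rfl fun i _ => by ring
  linarith

lemma kap_concat (K : (j : Fin N) → Fin (r j) → ℕ) (l : List (X N r)) (a : X N r) :
    kap K (l ++ [a]) = kap K l + K a.1 a.2 := by
  simp [kap]

lemma mu_concat (B : (j : Fin N) → Fin (r j) → ℕ) (l : List (X N r)) (a : X N r) :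
    mu B (l ++ [a]) = mu B l + B a.1 a.2 := by
  simp [mu]

lemma length_le_mu (B : (j : Fin N) → Fin (r j) → ℕ) (hB : ∀ j i, 1 ≤ B j i)
    (l : List (X N r)) : l.length ≤ mu B l := by
  induction l with
  | nil => simp
  | cons a l ih =>
    have := hB a.1 a.2
    simp only [mu, List.map_cons, List.sum_cons, List.length_cons] at ih ⊢
    omega

lemma wordP_nonneg (R : List (X N r) → Fin N) (q : (j : Fin N) → Fin (r j) → ℝ)
    (hq0 : ∀ j i, 0 ≤ q j i) (l : List (X N r)) : 0 ≤ wordP R q l := by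
  refine Finset.prod_nonneg fun ℓ _ => ?_
  split_ifs
  · exact hq0 _ _
  · exact le_rfl

lemma ASet_finite (B K : (j : Fin N) → Fin (r j) → ℕ) (hB : ∀ j i, 1 ≤ B j i) (b k : ℝ) :
    (ASet B K b k).Finite := by
  unfold ASet
  split_ifs
  · exact Set.finite_empty
  · exact Set.finite_singleton _
  · refine (List.finite_length_le (X N r) ⌊b⌋₊).subset fun l hl => ?_
    exact (length_le_mu B hB l).trans (Nat.le_floor hl.2.1)

/-- `l` is played according to `R`, and each of its letters has weight at least `c`. -/
def Follows (R : List (X N r) → Fin N) (q : (j : Fin N) → Fin (r j) → ℝ) (c : ℝ)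
    (l : List (X N r)) : Prop :=
  ∀ (n : ℕ) (h : n < l.length), (l[n]).1 = R (l.take n) ∧ c ≤ q (l[n]).1 (l[n]).2

lemma Follows.concat {R : List (X N r) → Fin N} {q : (j : Fin N) → Fin (r j) → ℝ} {c : ℝ}
    {l : List (X N r)} (hl : Follows R q c l) (i : Fin (r (R l))) (hi : c ≤ q (R l) i) :
    Follows R q c (l ++ [⟨R l, i⟩]) := by
  intro n hn
  rcases Nat.lt_or_ge n l.length with h | h
  · rw [List.getElem_append_left h, List.take_append_of_le_length h.le]
    exact hl n h
  · obtain rfl : n = l.length := by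
      simp only [List.length_append, List.length_singleton] at hn
      omega
    have hlast : (l ++ [(⟨R l, i⟩ : X N r)])[l.length] = ⟨R l, i⟩ := by simp
    rw [hlast]
    simpa using hi

lemma Follows.pow_le_wordP {R : List (X N r) → Fin N} {q : (j : Fin N) → Fin (r j) → ℝ} {c : ℝ}
    (hc : 0 ≤ c) {l : List (X N r)} (hl : Follows R q c l) : c ^ l.length ≤ wordP R q l := by
  have hconst : c ^ l.length = ∏ _ℓ : Fin l.length, c := by simp
  rw [hconst]
  refine Finset.prod_le_prod (fun _ _ => hc) fun ℓ _ => ?_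
  exact (hl ℓ.1 ℓ.2).2.trans_eq (if_pos (hl ℓ.1 ℓ.2).1).symm

/-- Playing a good letter at each step, a `k`-consistent `R` can be driven to coverage at least `n`,
for any `n ≤ k`, with coverage never exceeding `k` and cost at most `α` times the coverage, in no more
steps than the coverage reached. The last clause says that the threshold `k` is not met before
the last letter, as membership in `A^{αk,k}` requires. -/
lemma exists_word (B K : (j : Fin N) → Fin (r j) → ℕ) (hB : ∀ j i, 1 ≤ B j i) (α : ℝ)
    (q : (j : Fin N) → Fin (r j) → ℝ) (c : ℝ)
    (hgood : ∀ j, ∃ i, c ≤ q j i ∧ (B j i : ℝ) ≤ α * K j i)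
    (k : ℕ) (R : List (X N r) → Fin N) (hR : Consistent K k R) (n : ℕ) (hn : n ≤ k) :
    ∃ l : List (X N r), Follows R q c l ∧ l.length ≤ kap K l ∧ (mu B l : ℝ) ≤ α * kap K l ∧
      kap K l ≤ k ∧ n ≤ kap K l ∧ (l ≠ [] → kap K l.dropLast < k) := by
  induction n with
  | zero => exact ⟨[], fun n hn => by simp at hn, by simp, by simp [mu, kap], by simp [kap],
      by simp, by simp⟩
  | succ n ih =>
    obtain ⟨l, hf, hlen, hmu, hk, hnl, hdrop⟩ := ih (by omega)
    by_cases hlt : n + 1 ≤ kap K l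
    · exact ⟨l, hf, hlen, hmu, hk, hlt, hdrop⟩
    have hlk : kap K l < k := by omega
    obtain ⟨i, hci, hbi⟩ := hgood (R l)
    -- a good letter has positive cost, hence positive coverage
    have hKi : 1 ≤ K (R l) i := by
      by_contra hK
      have h0 : K (R l) i = 0 := by omega
      have h1 : (1 : ℝ) ≤ B (R l) i := by exact_mod_cast hB (R l) i
      rw [h0] at hbi
      simp only [Nat.cast_zero, mul_zero] at hbi
      linarith
    have hcons := hR l hlk i
    refine ⟨l ++ [⟨R l, i⟩], hf.concat i hci, ?_, ?_, ?_, ?_, ?_⟩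
    · rw [kap_concat, List.length_append, List.length_singleton]
      dsimp only
      omega
    · rw [kap_concat, mu_concat]
      push_cast
      linarith
    · rw [kap_concat]
      dsimp only
      omega
    · rw [kap_concat]
      dsimp only
      omega
    · intro _
      rwa [List.dropLast_concat]

end RB

/-- Lemma 16, `alpha_bound`.  `q j` is the minimizer attaining
the `α`-branching number `M_j` (so `Q` is their concatenation) and `Q_min` is the
least positive entry of `Q`.  For every `k ∈ ℕ` and every `k`-consistent rules
mapping `R`:  `Pr_{R,Q}(S^{αk,k}) ≥ Q_min^k`. -/
theorem stmt_17
    (N : ℕ) (hN : 1 ≤ N) (r : Fin N → ℕ) (hr : ∀ j, 1 ≤ r j)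
    (bb kb : (j : Fin N) → Fin (r j) → ℕ)
    (hbb : ∀ j i, 1 ≤ bb j i)
    (γ : (j : Fin N) → Fin (r j) → ℝ)
    (hγpos : ∀ j i, 0 < γ j i) (hγsum : ∀ j, ∑ i, γ j i = 1)
    (hks : ∃ j, ∀ i, kb j i ≤ 1)
    (α : ℝ) (hα : 0 < α)
    (hfeas : ∀ j, (RB.BrSet α (bb j) (kb j) (γ j)).Nonempty)
    (q : (j : Fin N) → Fin (r j) → ℝ)
    (hq : ∀ j, (∀ i, 0 ≤ q j i) ∧ (∑ i, q j i = 1) ∧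
      (∑ i, q j i * (bb j i : ℝ)) ≤ α * (∑ i, q j i * (kb j i : ℝ)) ∧
      RB.KL (q j) (γ j) / (∑ i, q j i * (kb j i : ℝ)) =
        sInf (RB.BrSet α (bb j) (kb j) (γ j)))
    (Qmin : ℝ)
    (hQmin : IsLeast {x | ∃ a : RB.X N r, 0 < q a.1 a.2 ∧ x = q a.1 a.2} Qmin) :
    ∀ (k : ℕ) (R : List (RB.X N r) → Fin N), RB.Consistent kb k R →
      Qmin ^ k ≤ RB.PrS bb kb R q (α * (k : ℝ)) (k : ℝ) := by
  intro k R hR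
  obtain ⟨⟨a, ha, haQ⟩, hleast⟩ := hQmin
  have hQ0 : 0 ≤ Qmin := haQ ▸ ha.le
  have hQ1 : Qmin ≤ 1 := by
    rw [haQ, ← (hq a.1).2.1]
    exact Finset.single_le_sum (fun i _ => (hq a.1).1 i) (Finset.mem_univ a.2)
  have hgood : ∀ j, ∃ i, Qmin ≤ q j i ∧ (bb j i : ℝ) ≤ α * kb j i := by
    intro j
    obtain ⟨i, hi, hbi⟩ := RB.exists_good α (bb j) (kb j) (q j) (hq j).1 (hq j).2.1 (hq j).2.2.1
    exact ⟨i, hleast ⟨⟨j, i⟩, hi, rfl⟩, hbi⟩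
  obtain ⟨l, hf, hlen, hmu, hkl, hkl', hdrop⟩ :=
    RB.exists_word bb kb hbb α q Qmin hgood k R hR k le_rfl
  have hkap : RB.kap kb l = k := le_antisymm hkl hkl'
  rw [hkap] at hlen hmu
  have hmem : l ∈ RB.ASet bb kb (α * (k : ℝ)) (k : ℝ) := by
    unfold RB.ASet
    rw [if_neg (not_lt.mpr (by positivity))]
    split_ifs with h0
    · have hk0 : k = 0 := by exact_mod_cast le_antisymm h0 (Nat.cast_nonneg k)
      exact List.length_eq_zero_iff.mp (by omega)
    · have hne : l ≠ [] := by
        rintro rfl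
        apply h0
        rw [← hkap]
        simp [RB.kap]
      exact ⟨hne, hmu, by rw [hkap], by exact_mod_cast hdrop hne⟩
  have : Finite (RB.ASet bb kb (α * (k : ℝ)) (k : ℝ)) := (RB.ASet_finite bb kb hbb _ _).to_subtype
  calc Qmin ^ k ≤ Qmin ^ l.length := pow_le_pow_of_le_one hQ0 hQ1 hlen
    _ ≤ RB.wordP R q l := hf.pow_le_wordP hQ0
    _ ≤ RB.PrS bb kb R q (α * (k : ℝ)) (k : ℝ) :=
      Summable.of_finite.le_tsum (f := fun x : RB.ASet bb kb (α * (k : ℝ)) (k : ℝ) =>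
        RB.wordP R q x.1) ⟨l, hmem⟩
        fun x _ => RB.wordP_nonneg R q (fun j => (hq j).1) x.1
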